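/- Redundancy of adjacent sibling swapping (Proposition of the Appendix): Let σ be a type, E : List ℕ → Option σ a tree, and L₁, L₂ lists of triples (auxiliary tree, foot address, adjunction address). For any trees A, B : List ℕ → Option σ with foot addresses fA, fB and addresses t ≠ t', the simultaneous adjunction is unchanged by swapping the two adjacent entries: simul E (L₁ ++ (A, fA, t) :: (B, fB, t') :: L₂) = simul E (L₁ ++ (B, fB, t') :: (A, fA, t) :: L₂). -/

import Mathlib

/-- Adjunction of an auxiliary tree `A` with foot address `f` at address `t` in tree `E`. -/
def adjoin {σ : Type*} (E A : List ℕ → Option σ) (t f : List ℕ) : List ℕ → Option σ :=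
  fun r =>
    if t <+: r then
      let u := r.drop t.length
      if f <+: u then E (t ++ u.drop f.length) else A u
    else E r

/-- Address update after adjunction of a tree with foot `f` at address `t`. -/
def update (s f t : List ℕ) : List ℕ :=
  if t <+: s ∧ t ≠ s then t ++ f ++ s.drop t.length else s

/-- Simultaneous adjunction of a list of (auxiliary tree, foot address, adjunction address). -/
def simul {σ : Type*} (E : List ℕ → Option σ) :
    List ((List ℕ → Option σ) × List ℕ × List ℕ) → (List ℕ → Option σ)
  | [] => E
  | (A, f, t) :: L =>
      simul (adjoin E A t f) (L.map fun x => (x.1, x.2.1, update x.2.2 f t))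
  termination_by L => L.length
  decreasing_by simp

theorem adjoin_not {σ : Type*} (E A : List ℕ → Option σ) {t f r : List ℕ} (h : ¬ t <+: r) :
    adjoin E A t f r = E r := by simp [adjoin, h]

theorem adjoin_foot {σ : Type*} (E A : List ℕ → Option σ) (t f w : List ℕ) :
    adjoin E A t f (t ++ (f ++ w)) = E (t ++ w) := by simp [adjoin]

theorem adjoin_mid {σ : Type*} (E A : List ℕ → Option σ) (t : List ℕ) {f u : List ℕ}
    (h : ¬ f <+: u) : adjoin E A t f (t ++ u) = A u := by simp [adjoin, h]

theorem update_app (f t : List ℕ) {v : List ℕ} (h : v ≠ []) :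
    update (t ++ v) f t = t ++ (f ++ v) := by simp [update, h]

theorem update_self (f t : List ℕ) : update t f t = t := by simp [update]

theorem update_not (f : List ℕ) {s t : List ℕ} (h : ¬ t <+: s) : update s f t = s := by
  simp [update, h]

theorem update_cases (s f t : List ℕ) :
    (¬ t <+: s ∧ update s f t = s) ∨ (s = t ∧ update s f t = t) ∨
      ∃ v, v ≠ [] ∧ s = t ++ v ∧ update s f t = t ++ (f ++ v) := by
  by_cases h : t <+: s
  · obtain ⟨v, rfl⟩ := h
    by_cases hv : v = []
    · subst hv; simp [update]
    · exact Or.inr (Or.inr ⟨v, hv, rfl, update_app f t hv⟩)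
  · exact Or.inl ⟨h, update_not f h⟩

theorem update_inj {s s' : List ℕ} (f t : List ℕ) (h : update s f t = update s' f t) :
    s = s' := by
  rcases update_cases s f t with ⟨h1, e⟩ | ⟨h1, e⟩ | ⟨v, hv, rfl, e⟩ <;>
  rcases update_cases s' f t with ⟨h1', e'⟩ | ⟨h1', e'⟩ | ⟨v', hv', rfl, e'⟩ <;>
  rw [e, e'] at h
  · exact h
  · subst h; simp at h1
  · subst h; simp at h1
  · subst h; simp at h1'
  · rw [h1, h1']
  · simp [hv'] at h
  · subst h; simp at h1'
  · simp [hv] at h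
  · simpa using h

theorem adjoin_below {σ : Type*} (E A B : List ℕ → Option σ) (t v fA fB : List ℕ) :
    adjoin (adjoin E A t fA) B (t ++ (fA ++ v)) fB
      = adjoin (adjoin E B (t ++ v) fB) A t fA := by
  funext r
  by_cases h : t <+: r
  · obtain ⟨u, rfl⟩ := h
    by_cases h : fA <+: u
    · obtain ⟨w, rfl⟩ := h
      rw [adjoin_foot]
      by_cases h : v <+: w
      · obtain ⟨x, rfl⟩ := h
        have e1 : t ++ (fA ++ (v ++ x)) = (t ++ (fA ++ v)) ++ x := by simp
        have e2 : t ++ (v ++ x) = (t ++ v) ++ x := by simp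
        rw [e1, e2]
        by_cases h : fB <+: x
        · obtain ⟨y, rfl⟩ := h
          rw [adjoin_foot, adjoin_foot]
          have e1 : (t ++ (fA ++ v)) ++ y = t ++ (fA ++ (v ++ y)) := by simp
          rw [e1, adjoin_foot]; simp
        · rw [adjoin_mid _ _ _ h, adjoin_mid _ _ _ h]
      · have h1 : ¬ t ++ (fA ++ v) <+: t ++ (fA ++ w) := by
          simpa [List.prefix_append_right_inj] using h
        have h2 : ¬ t ++ v <+: t ++ w := by
          simpa [List.prefix_append_right_inj] using h
        rw [adjoin_not _ _ h1, adjoin_not _ _ h2, adjoin_foot]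
    · rw [adjoin_mid _ _ _ h, adjoin_not, adjoin_mid _ _ _ h]
      rw [List.prefix_append_right_inj]
      exact fun h' => h ((List.prefix_append _ _).trans h')
  · have h1 : ∀ x, ¬ (t ++ x) <+: r := fun x h' => h ((List.prefix_append _ _).trans h')
    rw [adjoin_not _ _ (h1 _), adjoin_not _ _ h, adjoin_not _ _ h, adjoin_not _ _ (h1 _)]

theorem not_both {t t' : List ℕ} (h : ¬ t <+: t') (h' : ¬ t' <+: t) (x : List ℕ) :
    ¬ t' <+: t ++ x := fun h1 =>
  (List.prefix_or_prefix_of_prefix (List.prefix_append t x) h1).elim h h'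

theorem adjoin_incomp {σ : Type*} (E A B : List ℕ → Option σ) {t t' : List ℕ} (fA fB : List ℕ)
    (h : ¬ t <+: t') (h' : ¬ t' <+: t) :
    adjoin (adjoin E A t fA) B t' fB = adjoin (adjoin E B t' fB) A t fA := by
  have key : ∀ (A B : List ℕ → Option σ) (t t' fA fB u : List ℕ), ¬ t <+: t' → ¬ t' <+: t →
      adjoin (adjoin E A t fA) B t' fB (t ++ u)
        = adjoin (adjoin E B t' fB) A t fA (t ++ u) := by
    intro A B t t' fA fB u h h'
    rw [adjoin_not _ _ (not_both h h' u)]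
    by_cases hu : fA <+: u
    · obtain ⟨w, rfl⟩ := hu
      rw [adjoin_foot, adjoin_foot, adjoin_not _ _ (not_both h h' w)]
    · rw [adjoin_mid _ _ _ hu, adjoin_mid _ _ _ hu]
  funext r
  by_cases h1 : t <+: r
  · obtain ⟨u, rfl⟩ := h1
    exact key A B t t' fA fB u h h'
  · by_cases h2 : t' <+: r
    · obtain ⟨u, rfl⟩ := h2
      exact (key B A t' t fB fA u h' h).symm
    · rw [adjoin_not _ _ h1, adjoin_not _ _ h2, adjoin_not _ _ h2, adjoin_not _ _ h1]

theorem update_below (s t fA fB : List ℕ) {v : List ℕ} (hv : v ≠ []) :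
    update (update s fA t) fB (t ++ (fA ++ v)) = update (update s fB (t ++ v)) fA t := by
  by_cases h : t <+: s
  · obtain ⟨w, rfl⟩ := h
    by_cases hw : w = []
    · subst hw
      have : ∀ x, ¬ (t ++ (x ++ v)) <+: t := by
        intro x h; have := h.length_le; have := List.length_pos_of_ne_nil hv
        simp only [List.length_append] at *; omega
      have h0 : ¬ (t ++ v) <+: t := this []
      rw [List.append_nil, update_self, update_not _ (this _), update_not _ h0, update_self]
    · rw [update_app _ _ hw]
      rcases update_cases (t ++ w) fB (t ++ v) with ⟨h1, e⟩ | ⟨h1, e⟩ | ⟨x, hx, h1, e⟩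
      · rw [e, update_app _ _ hw, update_not]
        simpa [List.prefix_append_right_inj] using h1
      · obtain rfl : w = v := by simpa using h1
        rw [e, update_self, update_app _ _ hv]
      · obtain rfl : w = v ++ x := by simpa using h1
        have e1 : t ++ (fA ++ (v ++ x)) = (t ++ (fA ++ v)) ++ x := by simp
        rw [e, e1, update_app _ _ hx, List.append_assoc t v, update_app _ _ (by simp [hv])]
        simp
  · have h1 : ∀ x, ¬ (t ++ x) <+: s := fun x h' => h ((List.prefix_append _ _).trans h')
    rw [update_not _ h, update_not _ (h1 _), update_not _ (h1 _), update_not _ h]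

theorem update_incomp (s : List ℕ) {t t' : List ℕ} (fA fB : List ℕ)
    (h : ¬ t <+: t') (h' : ¬ t' <+: t) :
    update (update s fA t) fB t' = update (update s fB t') fA t := by
  rcases update_cases s fA t with ⟨h1, e⟩ | ⟨rfl, e⟩ | ⟨v, hv, rfl, e⟩
  · rcases update_cases s fB t' with ⟨h2, e'⟩ | ⟨rfl, e'⟩ | ⟨v, hv, rfl, e'⟩
    · rw [e, e', e]
    · rw [e, e', e]
    · rw [e, e', update_not _ (not_both h' h _)]
  · rw [e, update_not _ h', e]
  · rw [e, update_not _ (not_both h h' _), update_not _ (not_both h h' _), e]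

theorem swap_core {σ : Type*} (E A B : List ℕ → Option σ) (fA fB t t' : List ℕ) (h : t ≠ t') :
    adjoin (adjoin E A t fA) B (update t' fA t) fB
      = adjoin (adjoin E B t' fB) A (update t fB t') fA ∧
    ∀ s, update (update s fA t) fB (update t' fA t)
      = update (update s fB t') fA (update t fB t') := by
  have below : ∀ (t v fB : List ℕ), v ≠ [] → update t fB (t ++ v) = t := by
    intro t v fB hv
    apply update_not
    intro h; have := h.length_le; have := List.length_pos_of_ne_nil hv
    simp only [List.length_append] at *; omega
  by_cases h1 : t <+: t'
  · obtain ⟨v, rfl⟩ := h1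
    have hv : v ≠ [] := by rintro rfl; simp at h
    rw [update_app _ _ hv, below _ _ _ hv]
    exact ⟨adjoin_below E A B t v fA fB, fun s => update_below s t fA fB hv⟩
  · by_cases h2 : t' <+: t
    · obtain ⟨v, rfl⟩ := h2
      have hv : v ≠ [] := by rintro rfl; simp at h
      rw [update_app _ _ hv, below _ _ _ hv]
      exact ⟨(adjoin_below E B A t' v fB fA).symm, fun s => (update_below s t' fB fA hv).symm⟩
    · rw [update_not _ h1, update_not _ h2]
      exact ⟨adjoin_incomp E A B fA fB h1 h2, fun s => update_incomp s fA fB h1 h2⟩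

/-- Redundancy of adjacent sibling swapping (Proposition of the Appendix). -/
theorem simul_swap {σ : Type*} (E : List ℕ → Option σ)
    (L₁ L₂ : List ((List ℕ → Option σ) × List ℕ × List ℕ))
    (A B : List ℕ → Option σ) (fA fB t t' : List ℕ) (h : t ≠ t') :
    simul E (L₁ ++ (A, fA, t) :: (B, fB, t') :: L₂)
      = simul E (L₁ ++ (B, fB, t') :: (A, fA, t) :: L₂) := by
  induction hn : L₁.length generalizing E L₁ L₂ t t' with
  | zero =>
    obtain rfl := List.length_eq_zero_iff.mp hn
    obtain ⟨h1, h2⟩ := swap_core E A B fA fB t t' h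
    simp only [List.nil_append, simul, List.map_cons, List.map_map]
    rw [h1]
    congr 2
    funext x
    simp [h2]
  | succ n ih =>
    match L₁, hn with
    | (C, f, s) :: L, hn =>
      simp only [List.cons_append, simul, List.map_append, List.map_cons]
      exact ih _ _ _ _ _ (fun e => h (update_inj f s e)) (by simpa using hn)
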